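/- Let α = (N; A, B, C, D; X, N⁻, N⁺) be a multiparametric conservative scattering LSDS. Then α is closely connected if and only if the linear pencil ζ ↦ ζA = ∑_{k=1}^N ζ_k A_k (ζ ∈ T^N) is completely non-unitary, i.e. there is no nonzero closed subspace X₀ ⊆ X that is invariant under every A_k and every A_k* and such that the restriction of ∑_{k=1}^N ζ_k A_k to X₀ is a unitary operator on X₀ for every ζ ∈ T^N. -/

import Mathlib

open ContinuousLinearMap

noncomputable section

/-- The block operator `[[A, B], [C, D]] : X ⊕ N⁻ → X ⊕ N⁺` (Hilbert space direct sum). -/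
def blockOp {X Nm Np : Type*}
    [NormedAddCommGroup X] [InnerProductSpace ℂ X]
    [NormedAddCommGroup Nm] [InnerProductSpace ℂ Nm]
    [NormedAddCommGroup Np] [InnerProductSpace ℂ Np]
    (A : X →L[ℂ] X) (B : Nm →L[ℂ] X) (C : X →L[ℂ] Np) (D : Nm →L[ℂ] Np) :
    WithLp 2 (X × Nm) →L[ℂ] WithLp 2 (X × Np) :=
  ((WithLp.prodContinuousLinearEquiv 2 ℂ X Np).symm :
      (X × Np) →L[ℂ] WithLp 2 (X × Np)) ∘L
    ((A ∘L ContinuousLinearMap.fst ℂ X Nm + B ∘L ContinuousLinearMap.snd ℂ X Nm).prod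
      (C ∘L ContinuousLinearMap.fst ℂ X Nm + D ∘L ContinuousLinearMap.snd ℂ X Nm)) ∘L
    (WithLp.prodContinuousLinearEquiv 2 ℂ X Nm : WithLp 2 (X × Nm) →L[ℂ] (X × Nm))

/-- A bounded operator between Hilbert spaces is unitary: `G*G = I` and `GG* = I`. -/
def IsUnitaryOp {E F : Type*}
    [NormedAddCommGroup E] [InnerProductSpace ℂ E] [CompleteSpace E]
    [NormedAddCommGroup F] [InnerProductSpace ℂ F] [CompleteSpace F]
    (G : E →L[ℂ] F) : Prop :=
  adjoint G ∘L G = ContinuousLinearMap.id ℂ E ∧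
    G ∘L adjoint G = ContinuousLinearMap.id ℂ F

/-- Close connectedness of a multiparametric system. -/
def CloselyConnectedN {Nn : ℕ} {X Nm Np : Type*}
    [NormedAddCommGroup X] [InnerProductSpace ℂ X] [CompleteSpace X]
    [NormedAddCommGroup Nm] [InnerProductSpace ℂ Nm] [CompleteSpace Nm]
    [NormedAddCommGroup Np] [InnerProductSpace ℂ Np] [CompleteSpace Np]
    (A : Fin Nn → (X →L[ℂ] X)) (B : Fin Nn → (Nm →L[ℂ] X))
    (C : Fin Nn → (X →L[ℂ] Np)) : Prop :=
  (Submodule.span ℂ {x : X | ∃ (w : List (Fin Nn × Bool)) (y : X),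
      ((∃ k u, y = B k u) ∨ (∃ j v, y = adjoint (C j) v)) ∧
      x = ((w.map fun p => cond p.2 (A p.1) (adjoint (A p.1))).prod) y}).topologicalClosure
    = ⊤

/-- The linear pencil `ζ ↦ ∑ ζ_k A_k` (on the unit torus) is completely non-unitary: there is
no nonzero closed subspace, invariant under all `A_k` and `A_k*`, on which every `∑ ζ_k A_k`
(`ζ ∈ T^N`) restricts to a unitary operator. -/
def CompletelyNonUnitaryPencil {Nn : ℕ} {X : Type*}
    [NormedAddCommGroup X] [InnerProductSpace ℂ X] [CompleteSpace X]
    (A : Fin Nn → (X →L[ℂ] X)) : Prop :=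
  ¬ ∃ X₀ : Submodule ℂ X, X₀ ≠ ⊥ ∧ IsClosed (X₀ : Set X) ∧
      (∀ k, ∀ x ∈ X₀, A k x ∈ X₀) ∧ (∀ k, ∀ x ∈ X₀, adjoint (A k) x ∈ X₀) ∧
      (∀ ζ : Fin Nn → ℂ, (∀ k, ‖ζ k‖ = 1) →
        (∀ x ∈ X₀, ‖(∑ k, ζ k • A k) x‖ = ‖x‖) ∧
        X₀.map ((∑ k, ζ k • A k : X →L[ℂ] X) : X →ₗ[ℂ] X) = X₀)

/-!
The closed linear span of all words in the `A_k`, `A_k*` applied to the ranges of the `B_k` and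
`C_k*` is the smallest closed subspace reducing every `A_k` and containing these ranges. Hence the
system is closely connected iff `0` is the only closed subspace reducing every `A_k` on which all
`C_k` and `B_k*` vanish. Unitarity of `ζG` gives `(ζA)*(ζA) + (ζC)*(ζC) = I` and
`(ζA)(ζA)* + (ζB)(ζB)* = I`, so that `ζA` is unitary on a reducing subspace exactly when `ζC` and
`(ζB)*` vanish there; and a pencil vanishes on the whole torus only if its coefficients do.
-/

section Reducing

variable {ι 𝕜 E : Type*} [RCLike 𝕜]
  [NormedAddCommGroup E] [InnerProductSpace 𝕜 E] [CompleteSpace E]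

theorem adjoint_sum_smul {F : Type*} [Fintype ι]
    [NormedAddCommGroup F] [InnerProductSpace 𝕜 F] [CompleteSpace F]
    (ζ : ι → 𝕜) (T : ι → E →L[𝕜] F) :
    adjoint (∑ k, ζ k • T k) = ∑ k, starRingEnd 𝕜 (ζ k) • adjoint (T k) := by
  simp only [map_sum, map_smulₛₗ]

/-- The subspace `U` reduces the operator `T`: it is invariant under both `T` and its adjoint.
It need not be closed. -/
structure Reduces (U : Submodule 𝕜 E) (T : E →L[𝕜] E) : Prop where
  map_mem : ∀ x ∈ U, T x ∈ U
  adjoint_map_mem : ∀ x ∈ U, adjoint T x ∈ U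

theorem Reduces.orthogonal {U : Submodule 𝕜 E} {T : E →L[𝕜] E} (h : Reduces U T) :
    Reduces Uᗮ T where
  map_mem := orthogonal_mem_invtSubmodule h.adjoint_map_mem
  adjoint_map_mem := orthogonal_mem_invtSubmodule (T := adjoint T) <| by
    rw [adjoint_adjoint]
    exact h.map_mem

theorem Reduces.sum_smul [Fintype ι] {U : Submodule 𝕜 E} {A : ι → E →L[𝕜] E}
    (h : ∀ k, Reduces U (A k)) (ζ : ι → 𝕜) : Reduces U (∑ k, ζ k • A k) where
  map_mem x hx := by
    simpa using U.sum_mem fun k _ => U.smul_mem (ζ k) ((h k).map_mem x hx)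
  adjoint_map_mem x hx := by
    rw [adjoint_sum_smul]
    simpa using U.sum_mem fun k _ =>
      U.smul_mem (starRingEnd 𝕜 (ζ k)) ((h k).adjoint_map_mem x hx)

/-- The smallest subspace that contains `G` and reduces every `A k`, encoded as the linear span of
the words in the `A k` and their adjoints applied to `G`; in a letter `(k, b)` of a word, `b` is
`true` for `A k` and `false` for its adjoint. -/
def reducingHull (A : ι → E →L[𝕜] E) (G : Set E) : Submodule 𝕜 E :=
  Submodule.span 𝕜 {x | ∃ (w : List (ι × Bool)) (y : E), y ∈ G ∧
    x = ((w.map fun p => cond p.2 (A p.1) (adjoint (A p.1))).prod) y}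

theorem subset_reducingHull (A : ι → E →L[𝕜] E) (G : Set E) : G ⊆ reducingHull A G :=
  fun y hy => Submodule.subset_span ⟨[], y, hy, by simp⟩

theorem reduces_reducingHull (A : ι → E →L[𝕜] E) (G : Set E) (k : ι) :
    Reduces (reducingHull A G) (A k) where
  map_mem := Submodule.span_le (p := (reducingHull A G).comap (A k).toLinearMap).2 <| by
    rintro _ ⟨w, y, hy, rfl⟩
    exact Submodule.subset_span ⟨(k, true) :: w, y, hy, by simp⟩
  adjoint_map_mem :=
    Submodule.span_le (p := (reducingHull A G).comap (adjoint (A k)).toLinearMap).2 <| by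
      rintro _ ⟨w, y, hy, rfl⟩
      exact Submodule.subset_span ⟨(k, false) :: w, y, hy, by simp⟩

theorem reducingHull_le {A : ι → E →L[𝕜] E} {G : Set E} {U : Submodule 𝕜 E}
    (hU : ∀ k, Reduces U (A k)) (hG : G ⊆ U) : reducingHull A G ≤ U := by
  refine Submodule.span_le.2 ?_
  rintro _ ⟨w, y, hy, rfl⟩
  induction w with
  | nil => simpa using hG hy
  | cons p w ih =>
    obtain ⟨k, _ | _⟩ := p
    · simpa using (hU k).adjoint_map_mem _ ih
    · simpa using (hU k).map_mem _ ih

theorem topologicalClosure_reducingHull_eq_top_iff {A : ι → E →L[𝕜] E} {G : Set E} :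
    (reducingHull A G).topologicalClosure = ⊤ ↔
      ∀ U : Submodule 𝕜 E, IsClosed (U : Set E) → (∀ k, Reduces U (A k)) → G ⊆ Uᗮ → U = ⊥ := by
  rw [Submodule.topologicalClosure_eq_top_iff]
  constructor
  · intro hbot U _ hU hG
    have hle : reducingHull A G ≤ Uᗮ := reducingHull_le (fun k => (hU k).orthogonal) hG
    exact eq_bot_iff.2 <|
      hbot ▸ U.le_orthogonal_orthogonal.trans (Submodule.orthogonal_le hle)
  · intro h
    exact h _ (Submodule.isClosed_orthogonal _)
      (fun k => (reduces_reducingHull A G k).orthogonal)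
      ((subset_reducingHull A G).trans (Submodule.le_orthogonal_orthogonal _))

end Reducing

section ComplementaryOperators

/-- The operator `T` restricts to a unitary operator of the subspace `U` onto itself. Unitarity is
encoded as being isometric and onto. -/
def IsUnitaryOn {𝕜 E : Type*} [RCLike 𝕜] [NormedAddCommGroup E] [InnerProductSpace 𝕜 E]
    (T : E →L[𝕜] E) (U : Submodule 𝕜 E) : Prop :=
  (∀ x ∈ U, ‖T x‖ = ‖x‖) ∧ U.map (T : E →ₗ[𝕜] E) = U

variable {𝕜 E F G : Type*} [RCLike 𝕜]
  [NormedAddCommGroup E] [InnerProductSpace 𝕜 E] [CompleteSpace E]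
  [NormedAddCommGroup F] [InnerProductSpace 𝕜 F] [CompleteSpace F]
  [NormedAddCommGroup G] [InnerProductSpace 𝕜 G] [CompleteSpace G]

theorem adjoint_apply_apply_eq_iff_of_adjoint_comp_add_eq_id {T : E →L[𝕜] F} {R : E →L[𝕜] G}
    (h : adjoint T ∘L T + adjoint R ∘L R = .id 𝕜 E) (x : E) :
    adjoint T (T x) = x ↔ R x = 0 := by
  have hx : adjoint T (T x) + adjoint R (R x) = x := DFunLike.congr_fun h x
  have hker : adjoint R (R x) = 0 ↔ R x = 0 := SetLike.ext_iff.1 (ker_adjoint_comp_self R) x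
  rw [← hker, ← add_eq_left (a := adjoint T (T x)), hx, eq_comm]

theorem norm_apply_eq_norm_iff_of_adjoint_comp_add_eq_id {T : E →L[𝕜] F} {R : E →L[𝕜] G}
    (h : adjoint T ∘L T + adjoint R ∘L R = .id 𝕜 E) (x : E) :
    ‖T x‖ = ‖x‖ ↔ R x = 0 := by
  have hx : ‖T x‖ ^ 2 + ‖R x‖ ^ 2 = ‖x‖ ^ 2 := by
    rw [apply_norm_sq_eq_inner_adjoint_left, apply_norm_sq_eq_inner_adjoint_left, ← map_add,
      ← inner_add_left, ← add_apply, h, id_apply, inner_self_eq_norm_sq]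
  rw [← sq_eq_sq₀ (norm_nonneg _) (norm_nonneg _), ← hx, left_eq_add, sq_eq_zero_iff,
    norm_eq_zero]

theorem Reduces.isUnitaryOn_iff {U : Submodule 𝕜 E} {T : E →L[𝕜] E} {R : E →L[𝕜] F}
    {S : G →L[𝕜] E} (hU : Reduces U T) (hR : adjoint T ∘L T + adjoint R ∘L R = .id 𝕜 E)
    (hS : T ∘L adjoint T + S ∘L adjoint S = .id 𝕜 E) :
    IsUnitaryOn T U ↔ ∀ x ∈ U, R x = 0 ∧ adjoint S x = 0 := by
  have hS' : adjoint (adjoint T) ∘L adjoint T + adjoint (adjoint S) ∘L adjoint S = .id 𝕜 E := by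
    simpa only [adjoint_adjoint] using hS
  constructor
  · rintro ⟨hnorm, hmap⟩ x hx
    have hRU : ∀ y ∈ U, R y = 0 := fun y hy =>
      (norm_apply_eq_norm_iff_of_adjoint_comp_add_eq_id hR y).1 (hnorm y hy)
    refine ⟨hRU x hx, ?_⟩
    obtain ⟨y, hy, rfl⟩ : ∃ y ∈ U, T y = x := by rwa [← hmap] at hx
    have hTy : adjoint T (T y) = y :=
      (adjoint_apply_apply_eq_iff_of_adjoint_comp_add_eq_id hR y).2 (hRU y hy)
    exact (norm_apply_eq_norm_iff_of_adjoint_comp_add_eq_id hS' (T y)).1 <| by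
      rw [hTy, hnorm y hy]
  · intro h
    refine ⟨fun x hx => (norm_apply_eq_norm_iff_of_adjoint_comp_add_eq_id hR x).2 (h x hx).1,
      le_antisymm (Submodule.map_le_iff_le_comap.2 hU.map_mem) fun x hx => ?_⟩
    refine ⟨adjoint T x, hU.adjoint_map_mem x hx, ?_⟩
    have hx' := (adjoint_apply_apply_eq_iff_of_adjoint_comp_add_eq_id hS' x).2 (h x hx).2
    rwa [adjoint_adjoint] at hx'

end ComplementaryOperators

section Pencil

theorem forall_norm_eq_one_sum_smul_eq_zero_iff {ι 𝕜 M : Type*} [Fintype ι] [NormedDivisionRing 𝕜]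
    [NeZero (2 : 𝕜)] [AddCommGroup M] [Module 𝕜 M] {v : ι → M} :
    (∀ ζ : ι → 𝕜, (∀ k, ‖ζ k‖ = 1) → ∑ k, ζ k • v k = 0) ↔ ∀ k, v k = 0 := by
  classical
  refine ⟨fun h k => ?_, fun h ζ _ => by simp [h]⟩
  -- Flipping the sign of a single coefficient changes the sum by `2 • v k`.
  let ε : ι → 𝕜 := fun j => if j = k then -1 else 1
  have hε : ∀ j, ‖ε j‖ = 1 := fun j => by dsimp only [ε]; split_ifs <;> simp
  have hdiff : ∑ j, (1 - ε j) • v j = 0 := by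
    simpa [sub_smul, h ε hε] using h 1 (by simp)
  have htwo : (2 : 𝕜) • v k = 0 := by
    rw [← hdiff, Finset.sum_eq_single k (fun j _ hj => by simp [ε, hj]) (by simp)]
    norm_num [ε]
  exact (smul_eq_zero.1 htwo).resolve_left two_ne_zero

variable {ι 𝕜 E F G : Type*} [Fintype ι] [RCLike 𝕜]
  [NormedAddCommGroup E] [InnerProductSpace 𝕜 E] [CompleteSpace E]
  [NormedAddCommGroup F] [InnerProductSpace 𝕜 F] [CompleteSpace F]
  [NormedAddCommGroup G] [InnerProductSpace 𝕜 G] [CompleteSpace G]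

theorem forall_norm_eq_one_adjoint_sum_smul_apply_eq_zero_iff {T : ι → E →L[𝕜] F} {y : F} :
    (∀ ζ : ι → 𝕜, (∀ k, ‖ζ k‖ = 1) → adjoint (∑ k, ζ k • T k) y = 0) ↔
      ∀ k, adjoint (T k) y = 0 := by
  rw [← forall_norm_eq_one_sum_smul_eq_zero_iff (𝕜 := 𝕜)]
  refine (star_involutive.surjective.forall).trans (forall_congr' fun ζ => ?_)
  simp [adjoint_sum_smul, -map_sum]

theorem forall_norm_eq_one_isUnitaryOn_sum_smul_iff {U : Submodule 𝕜 E} {A : ι → E →L[𝕜] E}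
    {B : ι → G →L[𝕜] E} {C : ι → E →L[𝕜] F} (hU : ∀ k, Reduces U (A k))
    (hAC : ∀ ζ : ι → 𝕜, (∀ k, ‖ζ k‖ = 1) →
      adjoint (∑ k, ζ k • A k) ∘L (∑ k, ζ k • A k) +
        adjoint (∑ k, ζ k • C k) ∘L (∑ k, ζ k • C k) = .id 𝕜 E)
    (hAB : ∀ ζ : ι → 𝕜, (∀ k, ‖ζ k‖ = 1) →
      (∑ k, ζ k • A k) ∘L adjoint (∑ k, ζ k • A k) +
        (∑ k, ζ k • B k) ∘L adjoint (∑ k, ζ k • B k) = .id 𝕜 E) :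
    (∀ ζ : ι → 𝕜, (∀ k, ‖ζ k‖ = 1) → IsUnitaryOn (∑ k, ζ k • A k) U) ↔
      ∀ x ∈ U, (∀ k, C k x = 0) ∧ ∀ k, adjoint (B k) x = 0 := by
  calc
    _ ↔ ∀ ζ : ι → 𝕜, (∀ k, ‖ζ k‖ = 1) →
          ∀ x ∈ U, (∑ k, ζ k • C k) x = 0 ∧ adjoint (∑ k, ζ k • B k) x = 0 :=
      forall₂_congr fun ζ hζ => (Reduces.sum_smul hU ζ).isUnitaryOn_iff (hAC ζ hζ) (hAB ζ hζ)
    _ ↔ ∀ x ∈ U, (∀ ζ : ι → 𝕜, (∀ k, ‖ζ k‖ = 1) → ∑ k, ζ k • C k x = 0) ∧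
          ∀ ζ : ι → 𝕜, (∀ k, ‖ζ k‖ = 1) → adjoint (∑ k, ζ k • B k) x = 0 := by
      simp only [sum_apply, smul_apply]
      exact ⟨fun h x hx => ⟨fun ζ hζ => (h ζ hζ x hx).1, fun ζ hζ => (h ζ hζ x hx).2⟩,
        fun h ζ hζ x hx => ⟨(h x hx).1 ζ hζ, (h x hx).2 ζ hζ⟩⟩
    _ ↔ _ := by
      simp only [forall_norm_eq_one_sum_smul_eq_zero_iff,
        forall_norm_eq_one_adjoint_sum_smul_apply_eq_zero_iff]

end Pencil

section BlockOperators

variable {X Nm Np : Type*}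
  [NormedAddCommGroup X] [InnerProductSpace ℂ X]
  [NormedAddCommGroup Nm] [InnerProductSpace ℂ Nm]
  [NormedAddCommGroup Np] [InnerProductSpace ℂ Np]
  {A : X →L[ℂ] X} {B : Nm →L[ℂ] X} {C : X →L[ℂ] Np} {D : Nm →L[ℂ] Np}

theorem blockOp_apply (p : WithLp 2 (X × Nm)) :
    blockOp A B C D p = WithLp.toLp 2 (A p.fst + B p.snd, C p.fst + D p.snd) :=
  rfl

variable [CompleteSpace X] [CompleteSpace Nm] [CompleteSpace Np]

theorem adjoint_blockOp :
    adjoint (blockOp A B C D) = blockOp (adjoint A) (adjoint C) (adjoint B) (adjoint D) := by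
  refine ((eq_adjoint_iff _ _).2 fun p q => ?_).symm
  simp only [blockOp_apply, WithLp.prod_inner_apply, inner_add_left, inner_add_right,
    adjoint_inner_left, WithLp.ofLp_fst, WithLp.ofLp_snd]
  ring

protected theorem IsUnitaryOp.adjoint {E F : Type*}
    [NormedAddCommGroup E] [InnerProductSpace ℂ E] [CompleteSpace E]
    [NormedAddCommGroup F] [InnerProductSpace ℂ F] [CompleteSpace F]
    {G : E →L[ℂ] F} (h : IsUnitaryOp G) : IsUnitaryOp (adjoint G) := by
  simpa only [IsUnitaryOp, adjoint_adjoint] using h.symm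

theorem adjoint_comp_add_eq_id_of_isUnitaryOp_blockOp (h : IsUnitaryOp (blockOp A B C D)) :
    adjoint A ∘L A + adjoint C ∘L C = .id ℂ X := by
  ext x
  have hx := congrArg WithLp.fst (DFunLike.congr_fun h.1 (WithLp.toLp 2 (x, 0)))
  simpa [adjoint_blockOp, blockOp_apply] using hx

theorem comp_adjoint_add_eq_id_of_isUnitaryOp_blockOp (h : IsUnitaryOp (blockOp A B C D)) :
    A ∘L adjoint A + B ∘L adjoint B = .id ℂ X := by
  have h' := h.adjoint
  rw [adjoint_blockOp] at h'
  simpa only [adjoint_adjoint] using adjoint_comp_add_eq_id_of_isUnitaryOp_blockOp h'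

end BlockOperators

section ScatteringSystem

/-- The vectors of the state space that are directly coupled to the input and output channels:
the ranges of the `B k` and of the adjoints of the `C k`. They generate the closely connected
part of a system. -/
def channelVectors {ι 𝕜 X Nm Np : Type*} [RCLike 𝕜]
    [NormedAddCommGroup X] [InnerProductSpace 𝕜 X] [CompleteSpace X]
    [NormedAddCommGroup Nm] [InnerProductSpace 𝕜 Nm]
    [NormedAddCommGroup Np] [InnerProductSpace 𝕜 Np] [CompleteSpace Np]
    (B : ι → Nm →L[𝕜] X) (C : ι → X →L[𝕜] Np) : Set X :=
  {y | (∃ k u, y = B k u) ∨ ∃ j v, y = adjoint (C j) v}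

theorem channelVectors_subset_orthogonal_iff {ι 𝕜 X Nm Np : Type*} [RCLike 𝕜]
    [NormedAddCommGroup X] [InnerProductSpace 𝕜 X] [CompleteSpace X]
    [NormedAddCommGroup Nm] [InnerProductSpace 𝕜 Nm] [CompleteSpace Nm]
    [NormedAddCommGroup Np] [InnerProductSpace 𝕜 Np] [CompleteSpace Np]
    {B : ι → Nm →L[𝕜] X} {C : ι → X →L[𝕜] Np} {U : Submodule 𝕜 X} :
    channelVectors B C ⊆ Uᗮ ↔ ∀ x ∈ U, (∀ k, C k x = 0) ∧ ∀ k, adjoint (B k) x = 0 := by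
  constructor
  · refine fun h x hx => ⟨fun k => ext_inner_right 𝕜 fun v => ?_,
      fun k => ext_inner_right 𝕜 fun u => ?_⟩
    · rw [inner_zero_left, ← adjoint_inner_right]
      exact h (.inr ⟨k, v, rfl⟩) x hx
    · rw [inner_zero_left, adjoint_inner_left]
      exact h (.inl ⟨k, u, rfl⟩) x hx
  · rintro h _ (⟨k, u, rfl⟩ | ⟨k, v, rfl⟩) x hx
    · rw [← adjoint_inner_left, (h x hx).2 k, inner_zero_left]
    · rw [adjoint_inner_right, (h x hx).1 k, inner_zero_left]

variable {Nn : ℕ} {X Nm Np : Type*}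
  [NormedAddCommGroup X] [InnerProductSpace ℂ X] [CompleteSpace X]
  [NormedAddCommGroup Nm] [InnerProductSpace ℂ Nm] [CompleteSpace Nm]
  [NormedAddCommGroup Np] [InnerProductSpace ℂ Np] [CompleteSpace Np]
  {A : Fin Nn → X →L[ℂ] X} {B : Fin Nn → Nm →L[ℂ] X} {C : Fin Nn → X →L[ℂ] Np}

theorem closelyConnectedN_iff :
    CloselyConnectedN A B C ↔
      ∀ U : Submodule ℂ X, IsClosed (U : Set X) → (∀ k, Reduces U (A k)) →
        (∀ x ∈ U, (∀ k, C k x = 0) ∧ ∀ k, adjoint (B k) x = 0) → U = ⊥ := by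
  simp only [← channelVectors_subset_orthogonal_iff]
  exact topologicalClosure_reducingHull_eq_top_iff

theorem completelyNonUnitaryPencil_iff :
    CompletelyNonUnitaryPencil A ↔
      ∀ U : Submodule ℂ X, IsClosed (U : Set X) → (∀ k, Reduces U (A k)) →
        (∀ ζ : Fin Nn → ℂ, (∀ k, ‖ζ k‖ = 1) → IsUnitaryOn (∑ k, ζ k • A k) U) → U = ⊥ := by
  constructor
  · intro h U hclosed hred hunit
    by_contra hne
    exact h ⟨U, hne, hclosed, fun k => (hred k).map_mem, fun k => (hred k).adjoint_map_mem, hunit⟩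
  · rintro h ⟨U, hne, hclosed, hA, hA', hunit⟩
    exact hne (h U hclosed (fun k => ⟨hA k, hA' k⟩) hunit)

theorem closely_connected_iff_completely_non_unitary_general
    (hAC : ∀ ζ : Fin Nn → ℂ, (∀ k, ‖ζ k‖ = 1) →
      adjoint (∑ k, ζ k • A k) ∘L (∑ k, ζ k • A k) +
        adjoint (∑ k, ζ k • C k) ∘L (∑ k, ζ k • C k) = .id ℂ X)
    (hAB : ∀ ζ : Fin Nn → ℂ, (∀ k, ‖ζ k‖ = 1) →
      (∑ k, ζ k • A k) ∘L adjoint (∑ k, ζ k • A k) +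
        (∑ k, ζ k • B k) ∘L adjoint (∑ k, ζ k • B k) = .id ℂ X) :
    CloselyConnectedN A B C ↔ CompletelyNonUnitaryPencil A := by
  rw [closelyConnectedN_iff, completelyNonUnitaryPencil_iff]
  exact forall₃_congr fun U _ hred => by
    rw [forall_norm_eq_one_isUnitaryOn_sum_smul_iff hred hAC hAB]

end ScatteringSystem

/-- a multiparametric conservative scattering LSDS is closely connected iff the
pencil `ζ ↦ ζA` is completely non-unitary. -/
theorem closely_connected_iff_completely_non_unitary {Nn : ℕ} {X Nm Np : Type*}
    [NormedAddCommGroup X] [InnerProductSpace ℂ X] [CompleteSpace X]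
    [TopologicalSpace.SeparableSpace X]
    [NormedAddCommGroup Nm] [InnerProductSpace ℂ Nm] [CompleteSpace Nm]
    [TopologicalSpace.SeparableSpace Nm]
    [NormedAddCommGroup Np] [InnerProductSpace ℂ Np] [CompleteSpace Np]
    [TopologicalSpace.SeparableSpace Np]
    (A : Fin Nn → (X →L[ℂ] X)) (B : Fin Nn → (Nm →L[ℂ] X))
    (C : Fin Nn → (X →L[ℂ] Np)) (D : Fin Nn → (Nm →L[ℂ] Np))
    (hcons : ∀ ζ : Fin Nn → ℂ, (∀ k, ‖ζ k‖ = 1) →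
      IsUnitaryOp
        (blockOp (∑ k, ζ k • A k) (∑ k, ζ k • B k) (∑ k, ζ k • C k) (∑ k, ζ k • D k))) :
    CloselyConnectedN A B C ↔ CompletelyNonUnitaryPencil A :=
  closely_connected_iff_completely_non_unitary_general
    (fun ζ hζ => adjoint_comp_add_eq_id_of_isUnitaryOp_blockOp (hcons ζ hζ))
    (fun ζ hζ => comp_adjoint_add_eq_id_of_isUnitaryOp_blockOp (hcons ζ hζ))
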